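/- For s ∈ ℂ, the determinant of the (2N+2)×(2N+2) bordered matrix [[s·I_{2N+1} − A, −B₂],[C₂, 0]] vanishes if and only if there exists k ∈ {1, …, N} such that (s + α)² = α² − 4·(c/Δℓ)²·sin²((2k−1)π/(2(2N+1))). In particular, the zeros of the transfer function G₂₂(s) = C₂(sI−A)⁻¹B₂ coincide with the zeros of G₁₁(s) = C₁(sI−A)⁻¹B₁. -/

import Mathlib

/-!
Write a vector of the bordered system as `(p, q, u)`. For the second input/output pair its kernel
equations are `s pᵢ = γ (qᵢ₋₁ - qᵢ)` for `i < N` (with `q₋₁ = 0`), `(s + 2α) qᵢ = β (pᵢ - pᵢ₊₁)`,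
`s p_N = γ (q_{N-1} - u)` and `p_N = 0`. Since `β, γ ≠ 0`, all of them but the last determine
`(p, q, u)` from `p₀`, by a recursion depending on `a = (s + 2α)/β` and `b = s/γ` (`ladder`). Hence
the determinant vanishes iff the solution with `p₀ = 1` has `p_N = 0` (`det_bordered_eq_zero_iff`).

The recursion is a Chebyshev one: if `a b = -4 sin² φ` then `pₙ cos φ = cos ((2n+1) φ)`
(`ladder_mul_cos`). Every complex number is of the form `-4 sin² φ`, so `p_N = 0` forces
`φ = (2m+1)π/(2(2N+1))` for an integer `m`. Periodicity and the reflection `φ ↦ π - φ` bring `m`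
into `{0, …, N}`, and `m = N` is impossible because there `a b = -4` and `pₙ = (-1)ⁿ (2n+1)`
(`ladder_eq_zero_iff`). As `s (s + 2α) = (s + α)² - α²` and `γ β = (c/Δℓ)²`, this is the stated
description of the zeros.

Reversing the order of both blocks and changing the sign of the `q`-block and of `u` turns one
bordered matrix into the other, so both determinants vanish simultaneously
(`det_bordered_reflect`).
-/

/-! ### The Chebyshev-type recursion and its zeros -/

/-- The pairs `(pₙ, qₙ)` determined by `p₀ = 1`, `q₀ = -b`, `pₙ₊₁ = pₙ - a qₙ` and
`qₙ₊₁ = qₙ - b pₙ₊₁`. -/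
def ladder (a b : ℂ) : ℕ → ℂ × ℂ
  | 0 => (1, -b)
  | n + 1 =>
    ((ladder a b n).1 - a * (ladder a b n).2,
      (ladder a b n).2 - b * ((ladder a b n).1 - a * (ladder a b n).2))

theorem ladder_succ_fst (a b : ℂ) (n : ℕ) :
    (ladder a b (n + 1)).1 = (ladder a b n).1 - a * (ladder a b n).2 := rfl

theorem ladder_succ_snd (a b : ℂ) (n : ℕ) :
    (ladder a b (n + 1)).2 = (ladder a b n).2 - b * (ladder a b (n + 1)).1 := rfl

/-- Closed form of the recursion. The second component is carried along for the induction. -/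
theorem ladder_mul_cos (a b φ : ℂ) (h : a * b = -4 * Complex.sin φ ^ 2) (n : ℕ) :
    (ladder a b n).1 * Complex.cos φ = Complex.cos ((2 * n + 1) * φ) ∧
    a * (ladder a b n).2 * Complex.cos φ =
      Complex.cos ((2 * n + 1) * φ) - Complex.cos ((2 * n + 3) * φ) := by
  have key : ∀ x : ℂ, Complex.cos (x - 2 * φ) + Complex.cos (x + 2 * φ) =
      2 * Complex.cos x - 4 * Complex.sin φ ^ 2 * Complex.cos x := by
    intro x
    rw [Complex.cos_sub, Complex.cos_add, Complex.cos_two_mul, Complex.cos_sq']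
    ring
  induction n with
  | zero =>
    have h1 := key φ
    rw [show φ - 2 * φ = -φ by ring, Complex.cos_neg] at h1
    simp only [ladder, Nat.cast_zero]
    rw [show (2 * 0 + 1) * φ = φ by ring, show (2 * 0 + 3) * φ = φ + 2 * φ by ring]
    refine ⟨by ring, ?_⟩
    linear_combination (-Complex.cos φ) * h + h1
  | succ n ih =>
    obtain ⟨h1, h2⟩ := ih
    have h3 := key ((2 * n + 3) * φ)
    rw [show (2 * (n : ℂ) + 3) * φ - 2 * φ = (2 * n + 1) * φ by ring] at h3
    have h4 : (ladder a b (n + 1)).1 * Complex.cos φ = Complex.cos ((2 * n + 3) * φ) := by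
      rw [ladder_succ_fst]
      linear_combination h1 - h2
    push_cast
    rw [show (2 * ((n : ℂ) + 1) + 1) * φ = (2 * n + 3) * φ by ring,
      show (2 * ((n : ℂ) + 1) + 3) * φ = (2 * n + 3) * φ + 2 * φ by ring]
    refine ⟨h4, ?_⟩
    rw [ladder_succ_snd]
    linear_combination h2 - (a * b) * h4 - Complex.cos ((2 * n + 3) * φ) * h + h3

/-- The degenerate case `cos φ = 0`, which the trigonometric closed form does not determine. -/
theorem ladder_of_mul_eq_neg_four (a b : ℂ) (h : a * b = -4) (n : ℕ) :
    (ladder a b n).1 = (-1) ^ n * (2 * n + 1) ∧ a * (ladder a b n).2 = (-1) ^ n * (4 * n + 4) := by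
  induction n with
  | zero =>
    simp only [ladder, Nat.cast_zero]
    refine ⟨by ring, by linear_combination -h⟩
  | succ n ih =>
    obtain ⟨h1, h2⟩ := ih
    have h4 : (ladder a b (n + 1)).1 = (-1) ^ (n + 1) * (2 * n + 3) := by
      rw [ladder_succ_fst]
      linear_combination h1 - h2
    refine ⟨by rw [h4]; push_cast; ring, ?_⟩
    rw [ladder_succ_snd]
    push_cast
    linear_combination h2 - (a * b) * h4 - (-1) ^ (n + 1) * (2 * n + 3) * h

theorem ladder_eq_zero_iff (a b : ℂ) (N : ℕ) :
    (ladder a b N).1 = 0 ↔ ∃ k ∈ Finset.Icc 1 N, a * b =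
      ((-4 * Real.sin ((2 * (k : ℝ) - 1) * Real.pi / (2 * (2 * (N : ℝ) + 1))) ^ 2 : ℝ) : ℂ) := by
  have hN : (0 : ℝ) < 2 * (2 * (N : ℝ) + 1) := by positivity
  constructor
  · intro h0
    obtain ⟨θ, hθ⟩ := Complex.cos_surjective (1 + a * b / 2)
    have hab : a * b = -4 * Complex.sin (θ / 2) ^ 2 := by
      have h1 := Complex.cos_two_mul (θ / 2)
      rw [show 2 * (θ / 2) = θ by ring, Complex.cos_sq', hθ] at h1
      linear_combination 2 * h1
    have h1 := (ladder_mul_cos a b _ hab N).1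
    rw [h0, zero_mul] at h1
    obtain ⟨m, hm⟩ := Complex.cos_eq_zero_iff.1 h1.symm
    have hN0 : (2 * (N : ℂ) + 1) ≠ 0 := by exact_mod_cast (by omega : 2 * N + 1 ≠ 0)
    -- The phase is real, so the sine may be taken over `ℝ`.
    have habm : a * b = ((-4 * Real.sin
        ((2 * (m : ℝ) + 1) * Real.pi / (2 * (2 * (N : ℝ) + 1))) ^ 2 : ℝ) : ℂ) := by
      have hθm : θ / 2 = (2 * (m : ℂ) + 1) * Real.pi / (2 * (2 * (N : ℂ) + 1)) := by
        rw [eq_div_iff (mul_ne_zero two_ne_zero hN0)]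
        linear_combination 2 * hm
      rw [hab, hθm]
      push_cast
      rfl
    set M : ℤ := 2 * N + 1 with hM
    have hMpos : 0 < M := by omega
    obtain ⟨r, hr⟩ := Int.eq_ofNat_of_zero_le (Int.emod_nonneg m hMpos.ne')
    have hrlt := Int.emod_lt_of_pos m hMpos
    have hdiv := Int.emod_add_mul_ediv m M
    set d : ℤ := m / M
    have hmr : (m : ℝ) = r + (2 * N + 1) * d := by
      rw [hr] at hdiv
      rw [← hdiv, hM]
      push_cast
      ring
    -- The squared sine is unchanged when the phase is shifted by `d π`.
    have habr : a * b = ((-4 * Real.sin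
        ((2 * (r : ℝ) + 1) * Real.pi / (2 * (2 * (N : ℝ) + 1))) ^ 2 : ℝ) : ℂ) := by
      rw [habm, hmr]
      congr 2
      rw [show (2 * ((r : ℝ) + (2 * N + 1) * d) + 1) * Real.pi / (2 * (2 * (N : ℝ) + 1))
        = (2 * (r : ℝ) + 1) * Real.pi / (2 * (2 * (N : ℝ) + 1)) + d * Real.pi by
          field_simp; ring, Real.sin_add_int_mul_pi, mul_pow, ← zpow_natCast, ← zpow_mul,
        mul_comm d, zpow_mul]
      simp
    rcases lt_trichotomy r N with hlt | heq | hgt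
    · refine ⟨r + 1, Finset.mem_Icc.2 ⟨by omega, by omega⟩, ?_⟩
      rw [habr]
      push_cast
      ring_nf
    · exfalso
      have h4 : a * b = -4 := by
        rw [habr, heq, show (2 * (N : ℝ) + 1) * Real.pi / (2 * (2 * (N : ℝ) + 1)) = Real.pi / 2 by
          field_simp, Real.sin_pi_div_two]
        norm_num
      rw [(ladder_of_mul_eq_neg_four a b h4 N).1] at h0
      exact mul_ne_zero (pow_ne_zero _ (by norm_num)) hN0 h0
    · refine ⟨2 * N + 1 - r, Finset.mem_Icc.2 ⟨by omega, by omega⟩, ?_⟩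
      rw [habr, Nat.cast_sub (by omega), ← Real.sin_pi_sub]
      congr 4
      push_cast
      field_simp
      ring
  · rintro ⟨k, hk, h⟩
    obtain ⟨hk1, hkN⟩ := Finset.mem_Icc.1 hk
    have hk1' : (1 : ℝ) ≤ k := by exact_mod_cast hk1
    have hkN' : (k : ℝ) ≤ N := by exact_mod_cast hkN
    set φ : ℝ := (2 * (k : ℝ) - 1) * Real.pi / (2 * (2 * (N : ℝ) + 1)) with hφ
    have hcos : Real.cos φ ≠ 0 := by
      apply (Real.cos_pos_of_mem_Ioo _).ne'
      have hpi := Real.pi_pos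
      constructor
      · have : 0 ≤ φ := by
          apply div_nonneg (mul_nonneg (by linarith) hpi.le) hN.le
        linarith
      · rw [hφ, div_lt_div_iff₀ hN two_pos]
        nlinarith
    have h1 := (ladder_mul_cos a b φ (by rw [h]; push_cast; ring) N).1
    have h2 : Complex.cos ((2 * N + 1) * φ) = 0 := by
      rw [Complex.cos_eq_zero_iff]
      refine ⟨k - 1, ?_⟩
      have hN0 : (2 * (N : ℂ) + 1) ≠ 0 := by exact_mod_cast (by omega : 2 * N + 1 ≠ 0)
      rw [hφ]
      push_cast
      field_simp
      ring
    rw [h2] at h1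
    refine (mul_eq_zero.1 h1).resolve_right ?_
    rw [← Complex.ofReal_cos]
    exact_mod_cast hcos

/-! ### The kernel of the bordered matrix -/

/-- The matrix `[[sI − A, −B], [C, 0]]`. -/
abbrev bordered (N : ℕ) (A : Matrix (Fin (N + 1) ⊕ Fin N) (Fin (N + 1) ⊕ Fin N) ℂ)
    (B C : Fin (N + 1) ⊕ Fin N → ℂ) (s : ℂ) :
    Matrix ((Fin (N + 1) ⊕ Fin N) ⊕ Fin 1) ((Fin (N + 1) ⊕ Fin N) ⊕ Fin 1) ℂ :=
  Matrix.fromBlocks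
    (s • (1 : Matrix (Fin (N + 1) ⊕ Fin N) (Fin (N + 1) ⊕ Fin N) ℂ) - A)
    (Matrix.of fun i (_ : Fin 1) => -B i)
    (Matrix.of fun (_ : Fin 1) j => C j)
    (0 : Matrix (Fin 1) (Fin 1) ℂ)

theorem sum_bidiag_row (n i : ℕ) (hi : i < n) (x y : ℂ) (f : ℕ → ℂ) :
    ∑ j : Fin (n + 1), (if (j : ℕ) = i then x else if (j : ℕ) = i + 1 then y else 0) * f j =
      x * f i + y * f (i + 1) := by
  rw [Fin.sum_univ_eq_sum_range
    (fun j => (if j = i then x else if j = i + 1 then y else 0) * f j) (n + 1)]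
  have : ∀ j, (if j = i then x else if j = i + 1 then y else 0) * f j =
      (if j = i then x * f j else 0) + (if j = i + 1 then y * f j else 0) := by
    intro j
    split_ifs <;> first | omega | simp
  simp only [this, Finset.sum_add_distrib, Finset.sum_ite_eq', Finset.mem_range]
  rw [if_pos (by omega), if_pos (by omega)]

theorem sum_bidiag_col (n i : ℕ) (x y : ℂ) (f : ℕ → ℂ) :
    ∑ j : Fin n, (if i = (j : ℕ) then x else if i = (j : ℕ) + 1 then y else 0) * f j =
      (if i < n then x * f i else 0) + (if 1 ≤ i ∧ i ≤ n then y * f (i - 1) else 0) := by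
  rw [Fin.sum_univ_eq_sum_range
    (fun j => (if i = j then x else if i = j + 1 then y else 0) * f j) n]
  have : ∀ j, (if i = j then x else if i = j + 1 then y else 0) * f j =
      (if i = j then x * f j else 0) + (if i - 1 = j then if 1 ≤ i then y * f j else 0 else 0) := by
    intro j
    split_ifs <;> first | omega | simp
  simp only [this, Finset.sum_add_distrib, Finset.sum_ite_eq, Finset.mem_range]
  congr 1
  split_ifs <;> first | omega | rfl

/-- The kernel equations of the second bordered matrix, with `N = m + 1`. The sequences `P` and `Q`
are indexed by `ℕ`; only their values at the indices of the two blocks matter. -/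
theorem bordered_mulVec_eq_zero_iff (m : ℕ) (α γ β s : ℂ)
    (A : Matrix (Fin (m + 1 + 1) ⊕ Fin (m + 1)) (Fin (m + 1 + 1) ⊕ Fin (m + 1)) ℂ)
    (hA11 : ∀ i j, A (Sum.inl i) (Sum.inl j) = 0)
    (hA12 : ∀ i j, A (Sum.inl i) (Sum.inr j) =
      if (i : ℕ) = (j : ℕ) then -γ else if (i : ℕ) = (j : ℕ) + 1 then γ else 0)
    (hA21 : ∀ i j, A (Sum.inr i) (Sum.inl j) =
      if (j : ℕ) = (i : ℕ) then β else if (j : ℕ) = (i : ℕ) + 1 then -β else 0)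
    (hA22 : ∀ i j, A (Sum.inr i) (Sum.inr j) = if i = j then -(2 * α) else 0)
    (P Q : ℕ → ℂ) (u : ℂ) :
    (bordered (m + 1) A (fun x => if x = Sum.inl (Fin.last (m + 1)) then -γ else 0)
      (fun x => if x = Sum.inl (Fin.last (m + 1)) then 1 else 0) s).mulVec
      (Sum.elim (Sum.elim (fun i => P i) (fun i => Q i)) (fun _ => u)) = 0 ↔
    s * P 0 + γ * Q 0 = 0 ∧ (∀ i < m, s * P (i + 1) + γ * Q (i + 1) - γ * Q i = 0) ∧
    s * P (m + 1) - γ * Q m + γ * u = 0 ∧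
    (∀ i < m + 1, (s + 2 * α) * Q i - β * (P i - P (i + 1)) = 0) ∧ P (m + 1) = 0 := by
  have e1 : ∀ i : Fin (m + 1 + 1), (bordered (m + 1) A
      (fun x => if x = Sum.inl (Fin.last (m + 1)) then -γ else 0)
      (fun x => if x = Sum.inl (Fin.last (m + 1)) then 1 else 0) s).mulVec
      (Sum.elim (Sum.elim (fun i => P i) (fun i => Q i)) (fun _ => u)) (Sum.inl (Sum.inl i)) =
      s * P i - ((if (i : ℕ) < m + 1 then -γ * Q i else 0) +
        (if 1 ≤ (i : ℕ) ∧ (i : ℕ) ≤ m + 1 then γ * Q (i - 1) else 0)) +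
        (if (i : ℕ) = m + 1 then γ else 0) * u := by
    intro i
    rw [← sum_bidiag_col]
    simp only [bordered, Matrix.mulVec, dotProduct, Fintype.sum_sum_type, Matrix.fromBlocks_apply₁₁,
      Matrix.fromBlocks_apply₁₂, Matrix.sub_apply, Matrix.smul_apply, Matrix.one_apply, hA11, hA12,
      Sum.elim_inl, Sum.elim_inr, Matrix.of_apply, Sum.inl.injEq, Fin.ext_iff, Fin.val_last,
      reduceCtorEq, if_false, smul_eq_mul, mul_zero, zero_sub, sub_zero, neg_mul,
      Finset.sum_neg_distrib, Fin.sum_univ_one, ← sub_eq_add_neg]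
    simp [← Fin.ext_iff]
    split_ifs <;> ring
  have e2 : ∀ i : Fin (m + 1), (bordered (m + 1) A
      (fun x => if x = Sum.inl (Fin.last (m + 1)) then -γ else 0)
      (fun x => if x = Sum.inl (Fin.last (m + 1)) then 1 else 0) s).mulVec
      (Sum.elim (Sum.elim (fun i => P i) (fun i => Q i)) (fun _ => u)) (Sum.inl (Sum.inr i)) =
      (s + 2 * α) * Q i - β * (P i - P (i + 1)) := by
    intro i
    have h := sum_bidiag_row (m + 1) i i.2 β (-β) P
    simp only [bordered, Matrix.mulVec, dotProduct, Fintype.sum_sum_type, Matrix.fromBlocks_apply₁₁,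
      Matrix.fromBlocks_apply₁₂, Matrix.sub_apply, Matrix.smul_apply, Matrix.one_apply, hA21, hA22,
      Sum.elim_inl, Sum.elim_inr, Matrix.of_apply, Sum.inr.injEq,
      reduceCtorEq, if_false, smul_eq_mul, mul_zero, zero_sub, neg_mul,
      Finset.sum_neg_distrib, Fin.sum_univ_one, h]
    simp [sub_mul, Finset.sum_sub_distrib]
    ring
  have e3 : ∀ i : Fin 1, (bordered (m + 1) A
      (fun x => if x = Sum.inl (Fin.last (m + 1)) then -γ else 0)
      (fun x => if x = Sum.inl (Fin.last (m + 1)) then 1 else 0) s).mulVec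
      (Sum.elim (Sum.elim (fun i => P i) (fun i => Q i)) (fun _ => u)) (Sum.inr i) =
      P (m + 1) := by
    intro i
    simp [bordered, Matrix.mulVec, dotProduct, Fintype.sum_sum_type]
  rw [funext_iff]
  simp only [Sum.forall, e1, e2, e3, Pi.zero_apply]
  constructor
  · rintro ⟨⟨h1, h2⟩, h3⟩
    refine ⟨?_, ?_, ?_, fun i hi => h2 ⟨i, hi⟩, h3 0⟩
    · simpa using h1 0
    · intro i hi
      have h := h1 ⟨i + 1, by omega⟩
      simp only [Nat.add_lt_add_iff_right, hi, if_true, Nat.add_sub_cancel] at h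
      rw [if_pos (by omega), if_neg (by omega)] at h
      linear_combination h
    · have h := h1 ⟨m + 1, by omega⟩
      simp at h
      linear_combination h
  · rintro ⟨h0, h1, h2, h3, h4⟩
    refine ⟨⟨?_, fun i => h3 i i.2⟩, fun _ => h4⟩
    rintro ⟨i, hi⟩
    rcases i with _ | i
    · simpa using h0
    · rcases (show i < m ∨ i = m by omega) with him | rfl
      · have h := h1 i him
        simp only [Nat.add_lt_add_iff_right, him, if_true, Nat.add_sub_cancel]
        rw [if_pos (by omega), if_neg (by omega)]
        linear_combination h
      · simp
        linear_combination h2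

theorem det_bordered_eq_zero_iff (m : ℕ) (α γ β s : ℂ) (hγ : γ ≠ 0) (hβ : β ≠ 0)
    (A : Matrix (Fin (m + 1 + 1) ⊕ Fin (m + 1)) (Fin (m + 1 + 1) ⊕ Fin (m + 1)) ℂ)
    (hA11 : ∀ i j, A (Sum.inl i) (Sum.inl j) = 0)
    (hA12 : ∀ i j, A (Sum.inl i) (Sum.inr j) =
      if (i : ℕ) = (j : ℕ) then -γ else if (i : ℕ) = (j : ℕ) + 1 then γ else 0)
    (hA21 : ∀ i j, A (Sum.inr i) (Sum.inl j) =
      if (j : ℕ) = (i : ℕ) then β else if (j : ℕ) = (i : ℕ) + 1 then -β else 0)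
    (hA22 : ∀ i j, A (Sum.inr i) (Sum.inr j) = if i = j then -(2 * α) else 0) :
    (bordered (m + 1) A (fun x => if x = Sum.inl (Fin.last (m + 1)) then -γ else 0)
      (fun x => if x = Sum.inl (Fin.last (m + 1)) then 1 else 0) s).det = 0 ↔
    (ladder ((s + 2 * α) / β) (s / γ) (m + 1)).1 = 0 := by
  rw [← Matrix.exists_mulVec_eq_zero_iff]
  set L := ladder ((s + 2 * α) / β) (s / γ) with hL
  have hLp : ∀ n, (L (n + 1)).1 = (L n).1 - (s + 2 * α) / β * (L n).2 := ladder_succ_fst _ _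
  have hLq : ∀ n, (L (n + 1)).2 = (L n).2 - s / γ * (L (n + 1)).1 := ladder_succ_snd _ _
  have hL0 : L 0 = (1, -(s / γ)) := rfl
  constructor
  · rintro ⟨v, hv0, hv⟩
    by_contra hne
    -- Extend the two blocks of `v` by zero to sequences on `ℕ`.
    obtain ⟨P, hP⟩ : ∃ P : ℕ → ℂ, ∀ i : Fin (m + 1 + 1), P i = v (Sum.inl (Sum.inl i)) :=
      ⟨fun n => if h : n < m + 1 + 1 then v (Sum.inl (Sum.inl ⟨n, h⟩)) else 0,
        fun i => dif_pos i.2⟩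
    obtain ⟨Q, hQ⟩ : ∃ Q : ℕ → ℂ, ∀ i : Fin (m + 1), Q i = v (Sum.inl (Sum.inr i)) :=
      ⟨fun n => if h : n < m + 1 then v (Sum.inl (Sum.inr ⟨n, h⟩)) else 0, fun i => dif_pos i.2⟩
    have hvPQ : v = Sum.elim (Sum.elim (fun i : Fin (m + 1 + 1) => P i)
        (fun i : Fin (m + 1) => Q i)) (fun _ => v (Sum.inr 0)) := by
      funext x
      rcases x with (i | i) | i
      · exact (hP i).symm
      · exact (hQ i).symm
      · rw [Subsingleton.elim i 0]; rfl
    rw [hvPQ, bordered_mulVec_eq_zero_iff m α γ β s A hA11 hA12 hA21 hA22] at hv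
    obtain ⟨h0, h1, h2, h3, h4⟩ := hv
    have hQP : ∀ n < m + 1, P n = P 0 * (L n).1 ∧ Q n = P 0 * (L n).2 := by
      intro n
      induction n with
      | zero =>
        intro _
        rw [hL0]
        refine ⟨by simp, ?_⟩
        field_simp
        linear_combination h0
      | succ n ih =>
        intro hn
        obtain ⟨ih1, ih2⟩ := ih (by omega)
        have e1 := h3 n (by omega)
        have e2 := h1 n (by omega)
        have e3 : P (n + 1) = P 0 * (L (n + 1)).1 := by
          rw [hLp]
          field_simp
          linear_combination e1 + β * ih1 - (s + 2 * α) * ih2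
        refine ⟨e3, ?_⟩
        rw [hLq]
        field_simp
        linear_combination e2 + γ * ih2 - s * e3
    have hPlast : P (m + 1) = P 0 * (L (m + 1)).1 := by
      obtain ⟨ih1, ih2⟩ := hQP m (by omega)
      have e1 := h3 m (by omega)
      rw [hLp]
      field_simp
      linear_combination e1 + β * ih1 - (s + 2 * α) * ih2
    have hP0 : P 0 = 0 := by
      rw [h4] at hPlast
      exact (mul_eq_zero.1 hPlast.symm).resolve_right hne
    have hQm : Q m = 0 := by rw [(hQP m (by omega)).2, hP0, zero_mul]
    apply hv0
    rw [hvPQ]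
    funext x
    rcases x with (i | i) | i
    · have hi := i.2
      rcases (show (i : ℕ) < m + 1 ∨ (i : ℕ) = m + 1 by omega) with h | h
      · simp [(hQP i h).1, hP0]
      · simp [h, h4]
    · simp [(hQP i i.2).2, hP0]
    · rw [h4, hQm] at h2
      simpa [hγ] using h2
  · intro h
    refine ⟨Sum.elim (Sum.elim (fun i => (L i).1) (fun i => (L i).2)) (fun _ => (L m).2), ?_, ?_⟩
    · intro h0
      have := congrFun h0 (Sum.inl (Sum.inl 0))
      simp [hL0] at this
    · rw [bordered_mulVec_eq_zero_iff m α γ β s A hA11 hA12 hA21 hA22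
        (fun i => (L i).1) (fun i => (L i).2)]
      refine ⟨?_, ?_, ?_, ?_, h⟩
      · simp only [hL0]
        field_simp
        ring
      · intro i _
        simp only [hLq i]
        field_simp
        ring
      · simp only [h]
        ring
      · intro i _
        simp only [hLp i]
        field_simp
        ring

/-! ### The reflection symmetry -/

theorem det_bordered_reflect (N : ℕ) (α γ β s : ℂ)
    (A : Matrix (Fin (N + 1) ⊕ Fin N) (Fin (N + 1) ⊕ Fin N) ℂ)
    (hA11 : ∀ i j, A (Sum.inl i) (Sum.inl j) = 0)
    (hA12 : ∀ i j, A (Sum.inl i) (Sum.inr j) =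
      if (i : ℕ) = (j : ℕ) then -γ else if (i : ℕ) = (j : ℕ) + 1 then γ else 0)
    (hA21 : ∀ i j, A (Sum.inr i) (Sum.inl j) =
      if (j : ℕ) = (i : ℕ) then β else if (j : ℕ) = (i : ℕ) + 1 then -β else 0)
    (hA22 : ∀ i j, A (Sum.inr i) (Sum.inr j) = if i = j then -(2 * α) else 0) :
    (bordered N A (fun x => if x = Sum.inl (Fin.last N) then -γ else 0)
      (fun x => if x = Sum.inl (Fin.last N) then 1 else 0) s).det = 0 ↔
    (bordered N A (fun x => if x = Sum.inl 0 then γ else 0)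
      (fun x => if x = Sum.inl 0 then 1 else 0) s).det = 0 := by
  -- `e` reverses both blocks; the signs on `q` and on `u` are absorbed by the diagonal factors.
  let e : (Fin (N + 1) ⊕ Fin N) ⊕ Fin 1 ≃ (Fin (N + 1) ⊕ Fin N) ⊕ Fin 1 :=
    Equiv.sumCongr (Equiv.sumCongr Fin.revPerm Fin.revPerm) (Equiv.refl _)
  let d₁ : (Fin (N + 1) ⊕ Fin N) ⊕ Fin 1 → ℂ :=
    Sum.elim (Sum.elim (fun _ => 1) (fun _ => -1)) (fun _ => 1)
  let d₂ : (Fin (N + 1) ⊕ Fin N) ⊕ Fin 1 → ℂ :=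
    Sum.elim (Sum.elim (fun _ => 1) (fun _ => -1)) (fun _ => -1)
  have key : bordered N A (fun x => if x = Sum.inl (Fin.last N) then -γ else 0)
      (fun x => if x = Sum.inl (Fin.last N) then 1 else 0) s =
      Matrix.diagonal d₁ * (bordered N A (fun x => if x = Sum.inl 0 then γ else 0)
        (fun x => if x = Sum.inl 0 then 1 else 0) s).submatrix e e * Matrix.diagonal d₂ := by
    ext x y
    rw [Matrix.mul_diagonal, Matrix.diagonal_mul, Matrix.submatrix_apply]
    rcases x with (i | i) | i <;> rcases y with (j | j) | j <;>
      simp only [bordered, e, d₁, d₂, Equiv.sumCongr_apply, Sum.map_inl, Sum.map_inr,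
        Fin.revPerm_apply, Equiv.refl_apply, Matrix.fromBlocks_apply₁₁, Matrix.fromBlocks_apply₁₂,
        Matrix.fromBlocks_apply₂₁, Matrix.fromBlocks_apply₂₂, Matrix.of_apply, Matrix.sub_apply,
        Matrix.smul_apply, Matrix.one_apply, hA11, hA12, hA21, hA22, Sum.elim_inl, Sum.elim_inr,
        Sum.inl.injEq, Sum.inr.injEq, reduceCtorEq, if_false, Fin.ext_iff, Fin.val_rev,
        Fin.val_last, Fin.val_zero, Matrix.zero_apply, smul_eq_mul]
    all_goals
      try have hi := i.2
      try have hj := j.2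
      (try split_ifs) <;> first | omega | simp
  have hd₁ : (Matrix.diagonal d₁).det ≠ 0 := by
    rw [Matrix.det_diagonal, Finset.prod_ne_zero_iff]
    rintro ((i | i) | i) _ <;> simp [d₁]
  have hd₂ : (Matrix.diagonal d₂).det ≠ 0 := by
    rw [Matrix.det_diagonal, Finset.prod_ne_zero_iff]
    rintro ((i | i) | i) _ <;> simp [d₂]
  rw [key, Matrix.det_mul, Matrix.det_mul, Matrix.det_submatrix_equiv_self,
    mul_eq_zero, mul_eq_zero, or_iff_left hd₂, or_iff_right hd₁]


/-- The determinant of the bordered matrix `[[sI − A, −B₂],[C₂, 0]]` vanishes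
iff `(s + α)² = α² − 4 (c/Δℓ)² sin²((2k−1)π/(2(2N+1)))` for some `k ∈ {1,…,N}`; in particular,
the zeros of `G₂₂(s) = C₂ (sI − A)⁻¹ B₂` coincide with those of `G₁₁(s) = C₁ (sI − A)⁻¹ B₁`. -/
theorem stmt_5 (N : ℕ) (hN : 1 ≤ N) (c 𝒜 Δℓ α : ℝ)
    (hc : 0 < c) (h𝒜 : 0 < 𝒜) (hΔℓ : 0 < Δℓ) (hα : 0 < α)
    (γ β : ℝ) (hγ : γ = c ^ 2 / (𝒜 * Δℓ)) (hβ : β = 𝒜 / Δℓ)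
    (A : Matrix (Fin (N + 1) ⊕ Fin N) (Fin (N + 1) ⊕ Fin N) ℂ)
    (hA11 : ∀ i j, A (Sum.inl i) (Sum.inl j) = 0)
    (hA12 : ∀ i j, A (Sum.inl i) (Sum.inr j) =
      if (i : ℕ) = (j : ℕ) then (-γ : ℝ) else if (i : ℕ) = (j : ℕ) + 1 then (γ : ℝ) else 0)
    (hA21 : ∀ i j, A (Sum.inr i) (Sum.inl j) =
      if (j : ℕ) = (i : ℕ) then (β : ℝ) else if (j : ℕ) = (i : ℕ) + 1 then (-β : ℝ) else 0)
    (hA22 : ∀ i j, A (Sum.inr i) (Sum.inr j) = if i = j then (-(2 * α) : ℝ) else 0)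
    (B₁ C₁ B₂ C₂ : Fin (N + 1) ⊕ Fin N → ℂ)
    (hB₁ : B₁ = fun x => if x = Sum.inl 0 then (γ : ℂ) else 0)
    (hC₁ : C₁ = fun x => if x = Sum.inl 0 then 1 else 0)
    (hB₂ : B₂ = fun x => if x = Sum.inl (Fin.last N) then (-γ : ℂ) else 0)
    (hC₂ : C₂ = fun x => if x = Sum.inl (Fin.last N) then 1 else 0)
    (s : ℂ) :
    ((Matrix.fromBlocks
        (s • (1 : Matrix (Fin (N + 1) ⊕ Fin N) (Fin (N + 1) ⊕ Fin N) ℂ) - A)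
        (Matrix.of fun i (_ : Fin 1) => -B₂ i)
        (Matrix.of fun (_ : Fin 1) j => C₂ j)
        (0 : Matrix (Fin 1) (Fin 1) ℂ)).det = 0 ↔
      ∃ k ∈ Finset.Icc 1 N,
        (s + (α : ℂ)) ^ 2 =
          ((α ^ 2 - 4 * (c / Δℓ) ^ 2 *
            Real.sin ((2 * (k : ℝ) - 1) * Real.pi / (2 * (2 * (N : ℝ) + 1))) ^ 2 : ℝ) : ℂ)) ∧
    ((Matrix.fromBlocks
        (s • (1 : Matrix (Fin (N + 1) ⊕ Fin N) (Fin (N + 1) ⊕ Fin N) ℂ) - A)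
        (Matrix.of fun i (_ : Fin 1) => -B₂ i)
        (Matrix.of fun (_ : Fin 1) j => C₂ j)
        (0 : Matrix (Fin 1) (Fin 1) ℂ)).det = 0 ↔
     (Matrix.fromBlocks
        (s • (1 : Matrix (Fin (N + 1) ⊕ Fin N) (Fin (N + 1) ⊕ Fin N) ℂ) - A)
        (Matrix.of fun i (_ : Fin 1) => -B₁ i)
        (Matrix.of fun (_ : Fin 1) j => C₁ j)
        (0 : Matrix (Fin 1) (Fin 1) ℂ)).det = 0) := by
  subst hB₁ hC₁ hB₂ hC₂
  have hγ0 : (γ : ℂ) ≠ 0 := by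
    rw [hγ]; exact_mod_cast (by positivity : c ^ 2 / (𝒜 * Δℓ) ≠ 0)
  have hβ0 : (β : ℂ) ≠ 0 := by
    rw [hβ]; exact_mod_cast (by positivity : 𝒜 / Δℓ ≠ 0)
  have hγβ : (γ : ℂ) * β = ((c / Δℓ) ^ 2 : ℝ) := by
    rw [hγ, hβ, ← Complex.ofReal_mul]
    congr 1
    field_simp
  simp only [apply_ite Complex.ofReal, Complex.ofReal_neg, Complex.ofReal_mul, Complex.ofReal_ofNat,
    Complex.ofReal_zero] at hA12 hA21 hA22
  refine ⟨?_, det_bordered_reflect N α γ β s A hA11 hA12 hA21 hA22⟩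
  obtain ⟨m, rfl⟩ : ∃ m, N = m + 1 := ⟨N - 1, by omega⟩
  refine (det_bordered_eq_zero_iff m α γ β s hγ0 hβ0 A hA11 hA12 hA21 hA22).trans ?_
  rw [ladder_eq_zero_iff]
  refine exists_congr fun k => and_congr_right fun _ => ?_
  generalize Real.sin _ = S
  rw [div_mul_div_comm, div_eq_iff (mul_ne_zero hβ0 hγ0), mul_comm (β : ℂ), hγβ]
  push_cast
  constructor <;> intro h <;> linear_combination h
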